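/- Multiplication by a continuous function of the energy preserves the weak transport operator: Let f ∈ D(T) and χ ∈ C((-∞, E_0)) be such that (χ∘E)·f ∈ H and (χ∘E)·(T f) ∈ H. Then (χ∘E)·f ∈ D(T) and T((χ∘E)·f) = (χ∘E)·(T f) weakly. -/

import Mathlib

/-!
The identity `T (χ(E) f) = χ(E) T f` is formally the product rule together with `T E = 0`: test the
weak equation for `f` with `χ(E) ξ` in place of `ξ`. This product is not an admissible test
function, since `χ` is only continuous and `E` is only `C²`. Both defects are removed by an
approximation on the compact support `K` of `ξ` (`exists_multiplier`): `χ` is replaced by a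
polynomial `p`, by Weierstrass on the compact interval of energies occurring on `K`, and `U0` by a
radial mollification `G`, which is smooth, rotation invariant and close to `U0` in `C¹`
(`exists_smooth_approx`). The function `X(x,v) = p(|v|²/2 + G(x))` is then uniformly close to
`χ(E)` on `K`, and `T X = p'(|v|²/2 + G(x)) v·(∇G - ∇U0)(x)` is uniformly small there.

Testing with `ξ X` gives the claimed identity up to an error `ε ∫ B`, where `B` is a fixed integrable
function; its integrability holds because elements of `H` are integrable with weight `1/|φ'(E)|`
against continuous functions compactly supported in `S0` (`integrableOn_mul_test`).
-/

open MeasureTheory Real Set Filter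

noncomputable section

abbrev V3 : Type := Fin 3 → ℝ

def dot3 (x v : V3) : ℝ := ∑ i, x i * v i

def Lmom (z : V3 × V3) : ℝ := dot3 z.1 z.1 * dot3 z.2 z.2 - dot3 z.1 z.2 ^ 2

def energy (U0 : V3 → ℝ) (z : V3 × V3) : ℝ := dot3 z.2 z.2 / 2 + U0 z.1

def gradV (g : V3 → ℝ) (x : V3) : V3 := fun i => fderiv ℝ g x (Pi.single i 1)

def transport (U0 : V3 → ℝ) (f : V3 × V3 → ℝ) (z : V3 × V3) : ℝ :=
  fderiv ℝ f z (z.2, -gradV U0 z.1)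

def S0 (U0 : V3 → ℝ) (E0 : ℝ) : Set (V3 × V3) := {z | energy U0 z < E0}

def SO3 : Set (Matrix (Fin 3) (Fin 3) ℝ) := {A | A * A.transpose = 1 ∧ A.det = 1}

def rot (A : Matrix (Fin 3) (Fin 3) ℝ) (z : V3 × V3) : V3 × V3 := (A.mulVec z.1, A.mulVec z.2)

def SphSymAE (U0 : V3 → ℝ) (E0 : ℝ) (f : V3 × V3 → ℝ) : Prop :=
  ∀ A ∈ SO3, ∀ᵐ z ∂(volume.restrict (S0 U0 E0)), f (rot A z) = f z

def memH (φd : ℝ → ℝ) (U0 : V3 → ℝ) (E0 : ℝ) (f : V3 × V3 → ℝ) : Prop :=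
  AEStronglyMeasurable f (volume.restrict (S0 U0 E0)) ∧ SphSymAE U0 E0 f ∧
    IntegrableOn (fun z => f z ^ 2 / |φd (energy U0 z)|) (S0 U0 E0)

def innerH (φd : ℝ → ℝ) (U0 : V3 → ℝ) (E0 : ℝ) (f g : V3 × V3 → ℝ) : ℝ :=
  ∫ z in S0 U0 E0, f z * g z / |φd (energy U0 z)|

def IsSmoothTest (U0 : V3 → ℝ) (E0 : ℝ) (ξ : V3 × V3 → ℝ) : Prop :=
  ContDiff ℝ (⊤ : ℕ∞) ξ ∧ HasCompactSupport ξ ∧ tsupport ξ ⊆ S0 U0 E0 ∧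
    ∀ A ∈ SO3, ∀ z, ξ (rot A z) = ξ z

def weakT (φd : ℝ → ℝ) (U0 : V3 → ℝ) (E0 : ℝ) (f μ : V3 × V3 → ℝ) : Prop :=
  ∀ ξ, IsSmoothTest U0 E0 ξ →
    ∫ z in S0 U0 E0, f z * transport U0 ξ z / |φd (energy U0 z)| =
      -∫ z in S0 U0 E0, μ z * ξ z / |φd (energy U0 z)|

def memD (φd : ℝ → ℝ) (U0 : V3 → ℝ) (E0 : ℝ) (f : V3 × V3 → ℝ) : Prop :=
  memH φd U0 E0 f ∧ ∃ μ, memH φd U0 E0 μ ∧ weakT φd U0 E0 f μ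

structure NewtonianSteadyState (φ φd : ℝ → ℝ) (U0 : V3 → ℝ) (E0 : ℝ) : Prop where
  E0_neg : E0 < 0
  φ_nonneg : ∀ e, 0 ≤ φ e
  φ_deriv : ∀ e < E0, HasDerivAt φ (φd e) e
  φd_cont : ContinuousOn φd (Iio E0)
  φd_neg : ∀ e < E0, φd e < 0
  φ_vanish : ∀ e, E0 ≤ e → φ e = 0
  U0_smooth : ContDiff ℝ 2 U0
  U0_symm : ∀ A ∈ SO3, ∀ x : V3, U0 (A.mulVec x) = U0 x
  U0_decay : Tendsto U0 (cocompact V3) (nhds 0)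
  poisson : ∀ x : V3, ∑ i, fderiv ℝ (fun y => gradV U0 y i) x (Pi.single i (1 : ℝ)) =
      4 * Real.pi * ∫ v : V3, φ (energy U0 (x, v))
  S0_bounded : Bornology.IsBounded (S0 U0 E0)

/-- U₀ as a radial function. -/
def U0rad (U0 : V3 → ℝ) (r : ℝ) : ℝ := U0 (Pi.single 0 r)

/-- Particle energy in the coordinates (r,w,L). -/
def energyR (U0 : V3 → ℝ) (p : ℝ × ℝ × ℝ) : ℝ :=
  p.2.1 ^ 2 / 2 + p.2.2 / (2 * p.1 ^ 2) + U0rad U0 p.1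

/-- The set S₀ in the coordinates (r,w,L). -/
def S0r (U0 : V3 → ℝ) (E0 : ℝ) : Set (ℝ × ℝ × ℝ) :=
  {p | 0 < p.1 ∧ 0 < p.2.2 ∧ energyR U0 p < E0}

/-- The coordinates (r,w,L) = (|x|, x·v/|x|, |x×v|²) of a point (x,v). -/
def coordR (z : V3 × V3) : ℝ × ℝ × ℝ :=
  (Real.sqrt (dot3 z.1 z.1), dot3 z.1 z.2 / Real.sqrt (dot3 z.1 z.1), Lmom z)

/-- The effective potential ψ_L(r) = U₀(r) + L/(2r²). -/
def psiEff (U0 : V3 → ℝ) (L r : ℝ) : ℝ := U0rad U0 r + L / (2 * r ^ 2)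

/-- The derivative ψ_L'(r). -/
def psiEffD (U0 : V3 → ℝ) (L r : ℝ) : ℝ := deriv (U0rad U0) r - L / r ^ 3

/-- rL L is the unique minimizer of the effective potential ψ_L on (0,∞),
    with negative minimum value. -/
def IsEffMinimizer (U0 : V3 → ℝ) (rL : ℝ → ℝ) : Prop :=
  ∀ L > 0, 0 < rL L ∧ IsMinOn (psiEff U0 L) (Ioi 0) (rL L) ∧ psiEff U0 L (rL L) < 0 ∧
    ∀ r ∈ Ioi (0:ℝ), IsMinOn (psiEff U0 L) (Ioi 0) r → r = rL L

/-- rm E L < rp E L are the turning points, i.e. the radii solving ψ_L(r) = E. -/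
def AreTurningPoints (U0 : V3 → ℝ) (E0 : ℝ) (rL : ℝ → ℝ) (rm rp : ℝ → ℝ → ℝ) : Prop :=
  ∀ L > 0, ∀ E, psiEff U0 L (rL L) < E → E < E0 →
    0 < rm E L ∧ rm E L < rL L ∧ rL L < rp E L ∧
      psiEff U0 L (rm E L) = E ∧ psiEff U0 L (rp E L) = E ∧
      ∀ r > 0, psiEff U0 L r = E → r = rm E L ∨ r = rp E L

/-- RW t r w L is the solution of the radial characteristic system
    ṙ = w, ẇ = -ψ_L'(r) with initial data (r,w). -/
def IsRadialFlow (U0 : V3 → ℝ) (RW : ℝ → ℝ → ℝ → ℝ → ℝ × ℝ) : Prop :=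
  ∀ r w L : ℝ, RW 0 r w L = (r, w) ∧
    ∀ t : ℝ, HasDerivAt (fun s => RW s r w L)
      ((RW t r w L).2, -psiEffD U0 L (RW t r w L).1) t

/-- The radial period T(E,L). -/
def Tper (U0 : V3 → ℝ) (rm rp : ℝ → ℝ → ℝ) (E L : ℝ) : ℝ :=
  2 * ∫ r in rm E L..rp E L, 1 / Real.sqrt (2 * E - 2 * psiEff U0 L r)

/-- The projection (P f)(E,L), computed from the representative fr of f in
    the coordinates (r,w,L). -/
def Pcoef (U0 : V3 → ℝ) (rm rp : ℝ → ℝ → ℝ) (RW : ℝ → ℝ → ℝ → ℝ → ℝ × ℝ)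
    (fr : ℝ × ℝ × ℝ → ℝ) (E L : ℝ) : ℝ :=
  ∫ t in (0:ℝ)..1,
    fr ((RW (t * Tper U0 rm rp E L) (rm E L) 0 L).1,
        (RW (t * Tper U0 rm rp E L) (rm E L) 0 L).2, L)

/-! ### Rotation invariant mollification -/

lemma dot3_rot {A : Matrix (Fin 3) (Fin 3) ℝ} (hA : A ∈ SO3) (x y : V3) :
    dot3 (A.mulVec x) (A.mulVec y) = dot3 x y := by
  have h : A.transpose * A = 1 := mul_eq_one_comm.mp hA.1
  change A.mulVec x ⬝ᵥ A.mulVec y = x ⬝ᵥ y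
  rw [Matrix.dotProduct_mulVec, Matrix.vecMul_mulVec, ← Matrix.dotProduct_mulVec,
    h, Matrix.one_mulVec]

lemma contDiff_dot3_self {n : WithTop ℕ∞} : ContDiff ℝ n (fun x : V3 => dot3 x x) := by
  unfold dot3; fun_prop

/-- The supremum norm of `V3` is dominated by the Euclidean one. -/
lemma norm_sq_le_dot3 (x : V3) : ‖x‖ ^ 2 ≤ dot3 x x := by
  have h0 : 0 ≤ dot3 x x := Finset.sum_nonneg fun i _ => mul_self_nonneg _
  have : ‖x‖ ≤ √(dot3 x x) := by
    refine (pi_norm_le_iff_of_nonneg (Real.sqrt_nonneg _)).2 fun i => ?_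
    refine Real.abs_le_sqrt ?_
    rw [pow_two]
    exact Finset.single_le_sum (f := fun i => x i * x i) (fun i _ => mul_self_nonneg _)
      (Finset.mem_univ i)
  calc ‖x‖ ^ 2 ≤ √(dot3 x x) ^ 2 := by gcongr
    _ = _ := Real.sq_sqrt h0

lemma hasCompactSupport_radialBump (b : ContDiffBump (0 : ℝ)) :
    HasCompactSupport (fun x : V3 => b (dot3 x x)) := by
  refine HasCompactSupport.intro (isCompact_closedBall (0 : V3) (√b.rOut)) fun x hx => ?_
  apply b.zero_of_le_dist
  rw [Metric.mem_closedBall, dist_zero_right, not_le] at hx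
  have h2 : b.rOut < ‖x‖ ^ 2 := (Real.sqrt_lt' (lt_of_le_of_lt (Real.sqrt_nonneg _) hx)).1 hx
  rw [dist_zero_right]
  exact (h2.le.trans (norm_sq_le_dot3 x)).trans (le_abs_self _)

lemma measurePreserving_rot {A : Matrix (Fin 3) (Fin 3) ℝ} (hA : A ∈ SO3) :
    MeasurePreserving (fun x : V3 => A.mulVec x) volume volume := by
  refine ⟨by fun_prop, ?_⟩
  have := Real.map_matrix_volume_pi_eq_smul_volume_pi (M := A) (by rw [hA.2]; norm_num)
  rw [hA.2] at this
  change Measure.map (Matrix.toLin' A) volume = volume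
  rw [this]
  simp

/-- A rotation invariant mollifier: a smooth probability density supported in a given ball
around the origin. -/
lemma exists_mollifier {δ : ℝ} (hδ : 0 < δ) :
    ∃ ρ : V3 → ℝ, ContDiff ℝ (⊤ : ℕ∞) ρ ∧ HasCompactSupport ρ ∧ (∀ x, 0 ≤ ρ x) ∧
      (∫ x, ρ x = 1) ∧ Function.support ρ ⊆ Metric.ball 0 δ ∧
      ∀ A ∈ SO3, ∀ x, ρ (A.mulVec x) = ρ x := by
  let b : ContDiffBump (0 : ℝ) := ⟨δ ^ 2 / 2, δ ^ 2, by positivity, by nlinarith [pow_pos hδ 2]⟩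
  let g : V3 → ℝ := fun x => b (dot3 x x)
  have hg : ContDiff ℝ (⊤ : ℕ∞) g := b.contDiff.comp contDiff_dot3_self
  have hgs : HasCompactSupport g := hasCompactSupport_radialBump b
  have hpos : 0 < ∫ x, g x := by
    refine hg.continuous.integral_pos_of_hasCompactSupport_nonneg_nonzero hgs
      (fun x => b.nonneg) (x := 0) ?_
    have : dot3 0 0 = 0 := by simp [dot3]
    simp only [g, this]
    rw [b.one_of_mem_closedBall (Metric.mem_closedBall_self b.rIn_pos.le)]
    norm_num
  refine ⟨fun x => (∫ y, g y)⁻¹ * g x, by fun_prop, hgs.mul_left, fun x =>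
    mul_nonneg (inv_nonneg.2 hpos.le) b.nonneg, ?_, ?_, ?_⟩
  · rw [integral_const_mul, inv_mul_cancel₀ hpos.ne']
  · intro x hx
    have h1 : g x ≠ 0 := fun h => hx (by simp [h])
    have h2 : dot3 x x ∈ Metric.ball (0 : ℝ) (δ ^ 2) := by
      rw [← show Function.support b = _ from b.support_eq]; exact h1
    rw [Metric.mem_ball, dist_zero_right] at h2 ⊢
    have h3 := (norm_sq_le_dot3 x).trans (le_abs_self _)
    exact lt_of_pow_lt_pow_left₀ 2 hδ.le (h3.trans_lt h2)
  · intro A hA x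
    simp only [g, dot3_rot hA]

open scoped Convolution in
/-- A compactly supported rotation invariant `C¹` function is a uniform limit, together with its
derivative, of smooth rotation invariant functions, namely of its radial mollifications. -/
lemma exists_smooth_approx_of_compact {W : V3 → ℝ} (hW : ContDiff ℝ 1 W)
    (hWc : HasCompactSupport W) (hWs : ∀ A ∈ SO3, ∀ x : V3, W (A.mulVec x) = W x)
    {ε : ℝ} (hε : 0 < ε) :
    ∃ G : V3 → ℝ, ContDiff ℝ (⊤ : ℕ∞) G ∧ (∀ A ∈ SO3, ∀ x : V3, G (A.mulVec x) = G x) ∧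
      ∀ x, |G x - W x| ≤ ε ∧ ‖fderiv ℝ G x - fderiv ℝ W x‖ ≤ ε := by
  have hdc : Continuous (fderiv ℝ W) := hW.continuous_fderiv (by norm_num)
  obtain ⟨δ₁, hδ₁, h₁⟩ := Metric.uniformContinuous_iff.1
    (hWc.uniformContinuous_of_continuous hW.continuous) ε hε
  obtain ⟨δ₂, hδ₂, h₂⟩ := Metric.uniformContinuous_iff.1
    ((hWc.fderiv (𝕜 := ℝ)).uniformContinuous_of_continuous hdc) ε hε
  obtain ⟨ρ, hρ, hρc, hρ0, hρ1, hρs, hρr⟩ := exists_mollifier (lt_min hδ₁ hδ₂)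
  refine ⟨ρ ⋆[ContinuousLinearMap.lsmul ℝ ℝ, volume] W, ?_, ?_, fun x => ⟨?_, ?_⟩⟩
  · exact hρc.contDiff_convolution_left _ hρ hW.continuous.locallyIntegrable
  · intro A hA x
    simp only [convolution_def, ContinuousLinearMap.lsmul_apply]
    have hmp := measurePreserving_rot hA
    have hc : Continuous fun t : V3 => ρ t • W (A.mulVec x - t) :=
      hρ.continuous.smul (hW.continuous.comp (by fun_prop))
    have := integral_map (μ := volume) hmp.measurable.aemeasurable
      (hc.aestronglyMeasurable (μ := Measure.map (fun x : V3 => A.mulVec x) volume))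
    rw [hmp.map_eq] at this
    rw [this]
    simp only [hρr A hA, ← Matrix.mulVec_sub, hWs A hA]
  · rw [← Real.dist_eq]
    refine dist_convolution_le hε.le hρs hρ0 hρ1 hW.continuous.aestronglyMeasurable ?_
    intro y hy
    exact (h₁ (lt_of_lt_of_le hy (min_le_left _ _))).le
  · rw [(hWc.hasFDerivAt_convolution_right _ hρ.continuous.locallyIntegrable hW x).fderiv,
      ← dist_eq_norm]
    have hL : (ContinuousLinearMap.lsmul ℝ ℝ : ℝ →L[ℝ] ℝ →L[ℝ] ℝ).precompR V3 =
        ContinuousLinearMap.lsmul ℝ ℝ := by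
      ext; simp [ContinuousLinearMap.precompR]
    rw [hL]
    refine dist_convolution_le hε.le hρs hρ0 hρ1 hdc.aestronglyMeasurable ?_
    intro y hy
    exact (h₂ (lt_of_lt_of_le hy (min_le_right _ _))).le

/-- The local version of the preceding lemma, without a condition on the support: multiplying by a
radial cutoff does not change the function where `dot3 x x < R`. -/
lemma exists_smooth_approx {U : V3 → ℝ} (hU : ContDiff ℝ 1 U)
    (hUs : ∀ A ∈ SO3, ∀ x : V3, U (A.mulVec x) = U x) (R : ℝ) {ε : ℝ} (hε : 0 < ε) :
    ∃ G : V3 → ℝ, ContDiff ℝ (⊤ : ℕ∞) G ∧ (∀ A ∈ SO3, ∀ x : V3, G (A.mulVec x) = G x) ∧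
      ∀ x, dot3 x x < R → |G x - U x| ≤ ε ∧ ‖fderiv ℝ G x - fderiv ℝ U x‖ ≤ ε := by
  let b : ContDiffBump (0 : ℝ) := ⟨|R| + 1, |R| + 2, by positivity, by linarith⟩
  have hb : ContDiff ℝ 1 (fun x : V3 => b (dot3 x x)) := b.contDiff.comp contDiff_dot3_self
  obtain ⟨G, hG, hGs, hGa⟩ := exists_smooth_approx_of_compact (W := fun x => b (dot3 x x) * U x)
    (hb.mul hU) (hasCompactSupport_radialBump b).mul_right
    (fun A hA x => by simp only [dot3_rot hA, hUs A hA]) hε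
  refine ⟨G, hG, hGs, fun x hx => ?_⟩
  have hev : (fun x => b (dot3 x x) * U x) =ᶠ[nhds x] U := by
    have ho : IsOpen {y : V3 | dot3 y y < R} :=
      isOpen_lt (contDiff_dot3_self (n := 0)).continuous continuous_const
    filter_upwards [ho.mem_nhds hx] with y hy
    have hy0 : 0 ≤ dot3 y y := Finset.sum_nonneg fun i _ => mul_self_nonneg _
    rw [b.one_of_mem_closedBall, one_mul]
    rw [Metric.mem_closedBall, dist_zero_right, Real.norm_of_nonneg hy0]
    change _ ≤ |R| + 1
    have : dot3 y y < R := hy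
    linarith [le_abs_self R]
  have h := hGa x
  rw [hev.fderiv_eq] at h
  rw [← hev.eq_of_nhds]
  exact h

/-! ### Smooth approximation of functions of the energy -/

lemma dot3_gradV (g : V3 → ℝ) (x v : V3) : dot3 v (gradV g x) = fderiv ℝ g x v := by
  conv_rhs => rw [pi_eq_sum_univ' v]
  simp only [dot3, gradV, map_sum, map_smul, smul_eq_mul]

lemma fderiv_dot3_self (v w : V3) :
    fderiv ℝ (fun x : V3 => dot3 x x / 2) v w = dot3 v w := by
  have h : ∀ i : Fin 3, HasFDerivAt (fun x : V3 => x i * x i) (v i •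
      (ContinuousLinearMap.proj (R := ℝ) (φ := fun _ : Fin 3 => ℝ) i) + v i •
      (ContinuousLinearMap.proj (R := ℝ) (φ := fun _ : Fin 3 => ℝ) i)) v := fun i =>
    (hasFDerivAt_apply i v).mul (hasFDerivAt_apply i v)
  have h2 := (HasFDerivAt.fun_sum (u := Finset.univ) fun i _ => h i).mul_const (2⁻¹ : ℝ)
  have h3 : (fun x : V3 => dot3 x x / 2) = fun x => (∑ i, x i * x i) * 2⁻¹ := by
    ext x; simp [dot3, div_eq_mul_inv]
  rw [h3, h2.fderiv]
  simp [dot3, Fin.sum_univ_three]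
  ring

lemma contDiff_energy {n : WithTop ℕ∞} {G : V3 → ℝ} (hG : ContDiff ℝ n G) :
    ContDiff ℝ n (energy G) :=
  ((contDiff_dot3_self.comp contDiff_snd).div_const 2).add (hG.comp contDiff_fst)

/-- The transport operator of the potential `U0` applied to the energy of another potential `G`
only sees the difference of the two force fields. -/
lemma transport_energy {U0 G : V3 → ℝ} (hG : Differentiable ℝ G) (z : V3 × V3) :
    transport U0 (energy G) z = (fderiv ℝ G z.1 - fderiv ℝ U0 z.1) z.2 := by
  have hd : DifferentiableAt ℝ (fun x : V3 => dot3 x x / 2) z.2 :=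
    (contDiff_dot3_self.div_const 2 |>.differentiable one_ne_zero).differentiableAt
  have h1 : HasFDerivAt (fun y : V3 × V3 => dot3 y.2 y.2 / 2) _ z :=
    hd.hasFDerivAt.comp z hasFDerivAt_snd
  have h2 : HasFDerivAt (fun y : V3 × V3 => G y.1) _ z :=
    (hG z.1).hasFDerivAt.comp z hasFDerivAt_fst
  have h3 : HasFDerivAt (energy G) _ z := h1.add h2
  rw [transport, h3.fderiv]
  have : dot3 z.2 (-gradV U0 z.1) = -dot3 z.2 (gradV U0 z.1) := by
    simp [dot3, Finset.sum_neg_distrib]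
  simp [fderiv_dot3_self, this, dot3_gradV]
  ring

/-- On a compact subset of `S0`, the function `χ ∘ E` is uniformly approximated by smooth rotation
invariant functions which are almost annihilated by the transport operator. They have the form
`p ∘ E'` with a polynomial `p` close to `χ` and the energy `E'` of a smooth potential close to `U0`
in `C¹`; the potential has to be changed because `E` itself is only `C²`. -/
lemma exists_multiplier {U0 : V3 → ℝ} {E0 : ℝ} (hU : ContDiff ℝ 2 U0)
    (hUs : ∀ A ∈ SO3, ∀ x : V3, U0 (A.mulVec x) = U0 x) {K : Set (V3 × V3)} (hK : IsCompact K)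
    (hKS : K ⊆ S0 U0 E0) {χ : ℝ → ℝ} (hχ : ContinuousOn χ (Iio E0)) {ε : ℝ} (hε : 0 < ε) :
    ∃ X : V3 × V3 → ℝ, ContDiff ℝ (⊤ : ℕ∞) X ∧ (∀ A ∈ SO3, ∀ z, X (rot A z) = X z) ∧
      ∀ z ∈ K, |χ (energy U0 z) - X z| ≤ ε ∧ |transport U0 X z| ≤ ε := by
  rcases K.eq_empty_or_nonempty with rfl | hne
  · exact ⟨fun _ => 0, contDiff_const, fun _ _ _ => rfl, by simp⟩
  have hEc : Continuous (energy U0) := (contDiff_energy hU).continuous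
  obtain ⟨za, hza, ha⟩ := hK.exists_isMinOn hne hEc.continuousOn
  obtain ⟨zb, hzb, hb⟩ := hK.exists_isMaxOn hne hEc.continuousOn
  set a := energy U0 za
  set b := energy U0 zb
  have hbE : b < E0 := hKS hzb
  obtain ⟨p, hp⟩ := exists_polynomial_near_of_continuousOn a b χ
    (hχ.mono fun x hx => hx.2.trans_lt hbE) (ε / 2) (by positivity)
  obtain ⟨M, hM⟩ := (isCompact_Icc (a := a - 1) (b := b + 1)).exists_bound_of_continuousOn
    (f := fun x => p.derivative.eval x) (by fun_prop)
  obtain ⟨C, hC⟩ := hK.exists_bound_of_continuousOn (f := fun z : V3 × V3 => z.2) (by fun_prop)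
  obtain ⟨R, hR⟩ := hK.exists_bound_of_continuousOn (f := fun z : V3 × V3 => dot3 z.1 z.1)
    ((contDiff_dot3_self (n := 0)).continuous.comp continuous_fst).continuousOn
  have hab : a ≤ b := ha hzb
  have hM0 : 0 ≤ M := (norm_nonneg _).trans (hM a ⟨by linarith, by linarith⟩)
  have hC0 : 0 ≤ C := (norm_nonneg _).trans (hC za hza)
  set δ : ℝ := min 1 (ε / (2 * (M + 1) * (C + 1))) with hδdef
  have hδ : 0 < δ := lt_min one_pos (by positivity)
  have hδM : (M * δ) * (C + 1) ≤ ε / 2 := by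
    have h1 : δ * (2 * (M + 1) * (C + 1)) ≤ ε :=
      (le_div_iff₀ (by positivity)).1 (min_le_right _ _)
    have h2 : 0 ≤ δ * (C + 1) := by positivity
    nlinarith
  obtain ⟨G, hG, hGs, hGa⟩ := exists_smooth_approx (hU.of_le (by norm_num)) hUs (R + 1) hδ
  have hGE : ContDiff ℝ (⊤ : ℕ∞) (energy G) := contDiff_energy hG
  refine ⟨fun z => p.eval (energy G z), (p.contDiff_aeval (𝕜 := ℝ) _).comp hGE, ?_, ?_⟩
  · intro A hA z
    simp only [energy, rot, dot3_rot hA, hGs A hA]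
  · intro z hz
    obtain ⟨hG0, hG1⟩ := hGa z.1 (by
      have := (le_abs_self _).trans (hR z hz); linarith)
    have hdiff : energy G z - energy U0 z = G z.1 - U0 z.1 := by simp only [energy]; ring
    have hE : energy U0 z ∈ Icc a b := ⟨ha hz, hb hz⟩
    have hE' : energy U0 z ∈ Icc (a - 1) (b + 1) := ⟨by linarith [hE.1], by linarith [hE.2]⟩
    have hEG : energy G z ∈ Icc (a - 1) (b + 1) := by
      have h1 := abs_le.1 (hG0.trans (min_le_left _ _))
      constructor <;> linarith [hE.1, hE.2, h1.1, h1.2]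
    have hMδC : M * δ * C ≤ ε / 2 ∧ M * δ ≤ ε / 2 := by
      have : 0 ≤ M * δ := by positivity
      have : 0 ≤ M * δ * C := by positivity
      constructor <;> nlinarith
    constructor
    · have h1 := hp _ hE
      have h2 := (convex_Icc (a - 1) (b + 1)).norm_image_sub_le_of_norm_deriv_le
        (f := fun x => p.eval x) (C := M) (fun x _ => p.differentiable x)
        (fun x hx => by rw [Polynomial.deriv]; exact hM x hx) hE' hEG
      rw [hdiff, Real.norm_eq_abs, Real.norm_eq_abs] at h2
      have h3 : |G z.1 - U0 z.1| * M ≤ δ * M := by gcongr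
      have h4 : χ (energy U0 z) - p.eval (energy G z) =
        -((p.eval (energy U0 z) - χ (energy U0 z))
          + (p.eval (energy G z) - p.eval (energy U0 z))) := by ring
      rw [h4, abs_neg]
      refine (abs_add_le _ _).trans ?_
      nlinarith
    · have h1 : HasFDerivAt (fun z => p.eval (energy G z)) _ z :=
        (p.hasDerivAt (energy G z)).comp_hasFDerivAt z
          (hGE.differentiable (by norm_num) z).hasFDerivAt
      have h2 : transport U0 (fun z => p.eval (energy G z)) z =
          p.derivative.eval (energy G z) * transport U0 (energy G) z := by
        simp only [transport]
        rw [h1.fderiv]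
        rfl
      rw [h2, transport_energy (hG.differentiable (by norm_num)), abs_mul]
      have h3 := hM _ hEG
      have h4 : |(fderiv ℝ G z.1 - fderiv ℝ U0 z.1) z.2| ≤ δ * C :=
        (ContinuousLinearMap.le_opNorm _ _).trans (mul_le_mul hG1 (hC z hz) (norm_nonneg _) hδ.le)
      calc _ ≤ M * (δ * C) := mul_le_mul h3 h4 (abs_nonneg _) hM0
        _ ≤ ε := by linarith [hMδC.1]

/-! ### Pairings with test functions -/

/-- Elements of `H` may be integrated against continuous functions with compact support in `S0`,
with the weight `1/|φ'(E)|`: on that support the weight is bounded. -/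
lemma integrableOn_mul_test {φd : ℝ → ℝ} {U0 : V3 → ℝ} {E0 : ℝ} (hU : Continuous U0)
    (hφc : ContinuousOn φd (Iio E0)) (hφ : ∀ e < E0, φd e < 0) {f g : V3 × V3 → ℝ}
    (hf : memH φd U0 E0 f) (hg : Continuous g) {K : Set (V3 × V3)} (hK : IsCompact K)
    (hKS : K ⊆ S0 U0 E0) (hgK : ∀ z ∉ K, g z = 0) :
    IntegrableOn (fun z => f z * g z / |φd (energy U0 z)|) (S0 U0 E0) := by
  have hEc : Continuous (energy U0) :=
    (((contDiff_dot3_self (n := 0)).continuous.comp continuous_snd).div_const 2).add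
      (hU.comp continuous_fst)
  have hSo : IsOpen (S0 U0 E0) := isOpen_lt hEc continuous_const
  have hw : ContinuousOn (fun z => |φd (energy U0 z)|) (S0 U0 E0) :=
    (hφc.comp hEc.continuousOn fun z hz => hz).abs
  have hw0 : ∀ z ∈ S0 U0 E0, |φd (energy U0 z)| ≠ 0 := fun z hz => abs_ne_zero.2 (hφ _ hz).ne
  have hg2 : IntegrableOn (fun z => g z ^ 2 / |φd (energy U0 z)|) (S0 U0 E0) := by
    have h1 : IntegrableOn (fun z => g z ^ 2 / |φd (energy U0 z)|) K :=
      ((hg.pow 2).continuousOn.div (hw.mono hKS) fun z hz =>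
        hw0 z (hKS hz)).integrableOn_compact hK
    refine IntegrableOn.mono_set ((integrableOn_iff_integrable_of_support_subset ?_).1
      h1).integrableOn (subset_univ _)
    intro z hz
    by_contra hzK
    exact hz (by simp [hgK z hzK])
  refine (hf.2.2.add hg2).mono' ?_ ?_
  · have : AEStronglyMeasurable (fun z => |φd (energy U0 z)|⁻¹) (volume.restrict (S0 U0 E0)) :=
      (hw.inv₀ hw0).aestronglyMeasurable hSo.measurableSet
    exact (hf.1.mul hg.aestronglyMeasurable).mul this
  · refine Eventually.of_forall fun z => ?_
    rw [Real.norm_eq_abs, abs_div, abs_abs, Pi.add_apply, ← add_div]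
    gcongr
    rw [abs_le]
    constructor <;> nlinarith [sq_nonneg (f z + g z), sq_nonneg (f z - g z), sq_nonneg (f z),
      sq_nonneg (g z)]


lemma continuous_transport {U0 : V3 → ℝ} {ξ : V3 × V3 → ℝ} (hU : ContDiff ℝ 2 U0)
    (hξ : ContDiff ℝ (⊤ : ℕ∞) ξ) : Continuous (transport U0 ξ) := by
  have hg : Continuous (gradV U0) := continuous_pi fun i =>
    (hU.continuous_fderiv (by norm_num)).clm_apply continuous_const
  exact (hξ.continuous_fderiv (by norm_num)).clm_apply
    (continuous_snd.prodMk (hg.comp continuous_fst).neg)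

lemma transport_eq_zero {U0 : V3 → ℝ} {ξ : V3 × V3 → ℝ} {z : V3 × V3} (hz : z ∉ tsupport ξ) :
    transport U0 ξ z = 0 := by
  have h : fderiv ℝ ξ z = 0 := by
    by_contra h
    exact hz (support_fderiv_subset ℝ h)
  simp [transport, h]

lemma transport_mul {U0 : V3 → ℝ} {ξ X : V3 × V3 → ℝ} (hξ : Differentiable ℝ ξ)
    (hX : Differentiable ℝ X) (z : V3 × V3) :
    transport U0 (fun z => ξ z * X z) z = ξ z * transport U0 X z + X z * transport U0 ξ z := by
  have h := ((hξ z).hasFDerivAt.mul (hX z).hasFDerivAt).fderiv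
  change fderiv ℝ (fun z => ξ z * X z) z = _ at h
  simp [transport, h]

/-! ### Multiplication by a function of the energy -/

/-- Lemma 3.1 (b): multiplication by a continuous function of the energy preserves
    the weak transport operator: if f ∈ D(T), χ ∈ C((-∞,E₀)) and (χ∘E)·f, (χ∘E)·(Tf) ∈ H,
    then (χ∘E)·f ∈ D(T) with T((χ∘E)·f) = (χ∘E)·(Tf) weakly. -/
theorem transport_mul_energy
    (φ φd : ℝ → ℝ) (U0 : V3 → ℝ) (E0 : ℝ)
    (hS : NewtonianSteadyState φ φd U0 E0)
    (f μ : V3 × V3 → ℝ)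
    (hf : memH φd U0 E0 f) (hμ : memH φd U0 E0 μ) (hw : weakT φd U0 E0 f μ)
    (χ : ℝ → ℝ) (hχ : ContinuousOn χ (Iio E0))
    (h1 : memH φd U0 E0 (fun z => χ (energy U0 z) * f z))
    (h2 : memH φd U0 E0 (fun z => χ (energy U0 z) * μ z)) :
    memD φd U0 E0 (fun z => χ (energy U0 z) * f z) ∧
      weakT φd U0 E0 (fun z => χ (energy U0 z) * f z)
        (fun z => χ (energy U0 z) * μ z) := by
  refine ⟨⟨h1, _, h2, ?weak⟩, ?weak⟩
  intro ξ hξ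
  obtain ⟨hξs, hξc, hξS, hξr⟩ := hξ
  have hU := hS.U0_smooth
  have hInt : ∀ {f g : V3 × V3 → ℝ}, memH φd U0 E0 f → Continuous g →
      (∀ z ∉ tsupport ξ, g z = 0) →
      IntegrableOn (fun z => f z * g z / |φd (energy U0 z)|) (S0 U0 E0) := fun hf hg h0 =>
    integrableOn_mul_test hU.continuous hS.φd_cont hS.φd_neg hf hg hξc hξS h0
  have hξ0 : ∀ z ∉ tsupport ξ, ξ z = 0 := fun z hz => image_eq_zero_of_notMem_tsupport hz
  have hT : Continuous (transport U0 ξ) := continuous_transport hU hξs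
  have hT0 : ∀ z ∉ tsupport ξ, transport U0 ξ z = 0 := fun z hz => transport_eq_zero hz
  have iχT := hInt h1 hT hT0
  have iχξ := hInt h2 hξs.continuous hξ0
  let B : V3 × V3 → ℝ := fun z => |(f z * transport U0 ξ z / |φd (energy U0 z)|)|
    + |(f z * ξ z / |φd (energy U0 z)|)| + |(μ z * ξ z / |φd (energy U0 z)|)|
  have iB : IntegrableOn B (S0 U0 E0) :=
    ((hInt hf hT hT0).abs.add (hInt hf hξs.continuous hξ0).abs).add
      (hInt hμ hξs.continuous hξ0).abs
  -- The defect of the claimed identity is at most `ε * ∫ B` for every `ε > 0`.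
  have key : ∀ ε > 0, |((∫ z in S0 U0 E0, χ (energy U0 z) * f z * transport U0 ξ z /
        |φd (energy U0 z)|) + ∫ z in S0 U0 E0, χ (energy U0 z) * μ z * ξ z /
        |φd (energy U0 z)|)| ≤ ε * ∫ z in S0 U0 E0, B z := by
    intro ε hε
    obtain ⟨X, hX, hXr, hXa⟩ := exists_multiplier hU hS.U0_symm hξc hξS hχ hε
    have hηs : ContDiff ℝ (⊤ : ℕ∞) (fun z => ξ z * X z) := hξs.mul hX
    have hηt : tsupport (fun z => ξ z * X z) ⊆ tsupport ξ := tsupport_mul_subset_left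
    have hη0 : ∀ z ∉ tsupport ξ, ξ z * X z = 0 := fun z hz => by rw [hξ0 z hz, zero_mul]
    have hw' := hw (fun z => ξ z * X z) ⟨hηs, hξc.mul_right, hηt.trans hξS,
      fun A hA z => by simp only [hξr A hA, hXr A hA]⟩
    have i3 := hInt hf (continuous_transport hU hηs)
      fun z hz => transport_eq_zero (U0 := U0) fun h => hz (hηt h)
    have i4 := hInt hμ hηs.continuous hη0
    have e : (∫ z in S0 U0 E0, χ (energy U0 z) * f z * transport U0 ξ z /
        |φd (energy U0 z)|) + ∫ z in S0 U0 E0, χ (energy U0 z) * μ z * ξ z /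
        |φd (energy U0 z)| = ∫ z in S0 U0 E0,
          ((χ (energy U0 z) * f z * transport U0 ξ z / |φd (energy U0 z)|
            + χ (energy U0 z) * μ z * ξ z / |φd (energy U0 z)|)
          - (f z * transport U0 (fun z => ξ z * X z) z / |φd (energy U0 z)|
            + μ z * (ξ z * X z) / |φd (energy U0 z)|)) := by
      refine Eq.trans ?_ (integral_sub (iχT.add iχξ) (i3.add i4)).symm
      rw [integral_add' iχT iχξ, integral_add' i3 i4, hw']
      ring
    rw [e, ← integral_const_mul, ← Real.norm_eq_abs]
    refine norm_integral_le_of_norm_le (iB.const_mul ε) (Eventually.of_forall fun z => ?_)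
    rw [transport_mul (hξs.differentiable (by norm_num)) (hX.differentiable (by norm_num))]
    by_cases hz : z ∈ tsupport ξ
    · obtain ⟨ha, hb⟩ := hXa z hz
      have e2 : χ (energy U0 z) * f z * transport U0 ξ z / |φd (energy U0 z)|
            + χ (energy U0 z) * μ z * ξ z / |φd (energy U0 z)|
          - (f z * (ξ z * transport U0 X z + X z * transport U0 ξ z) / |φd (energy U0 z)|
            + μ z * (ξ z * X z) / |φd (energy U0 z)|) =
          (χ (energy U0 z) - X z) * (f z * transport U0 ξ z / |φd (energy U0 z)|)
          - transport U0 X z * (f z * ξ z / |φd (energy U0 z)|)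
          + (χ (energy U0 z) - X z) * (μ z * ξ z / |φd (energy U0 z)|) := by ring
      -- Each summand is an `ε`-small factor times a summand of `B`.
      rw [e2, Real.norm_eq_abs]
      refine (abs_add_le _ _).trans ?_
      refine (add_le_add_left (abs_sub _ _) _).trans ?_
      rw [abs_mul, abs_mul, abs_mul]
      simp only [B, mul_add]
      gcongr
    · rw [hξ0 z hz, hT0 z hz]
      simp only [mul_zero, zero_mul, zero_div, add_zero, sub_zero, norm_zero]
      exact mul_nonneg hε.le (by positivity)
  have hB0 : 0 ≤ ∫ z in S0 U0 E0, B z := integral_nonneg fun z => by positivity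
  rw [eq_neg_iff_add_eq_zero, ← abs_nonpos_iff]
  refine le_of_forall_pos_le_add fun ε hε => ?_
  refine (key (ε / ((∫ z in S0 U0 E0, B z) + 1)) (by positivity)).trans ?_
  rw [zero_add, div_mul_eq_mul_div, div_le_iff₀ (by positivity)]
  nlinarith

end
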